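/- Soundness and eventual completeness combined: for every finite set of clauses s and every objective formula α, there exists a (large enough) belief level k ≥ 0 such that s ⊨ˢ B_k α if and only if s ⊨ α (classical entailment). -/

import Mathlib

/-! ## Limited belief: basic syntax and semantics (Schwering 2017, quantifier-free). -/

/-- Standard names (a countably infinite supply). -/
abbrev Name := ℕ

/-- Function terms `f(n₁,…,n_j)`: a function symbol applied to standard names. -/
structure FnTerm where
  sym : ℕ
  args : List Name
deriving DecidableEq, Inhabited

/-- Literals `t ≈ n` (pos) and `t ≉ n` (neg). -/
inductive Lit where
  | pos (t : FnTerm) (n : Name)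
  | neg (t : FnTerm) (n : Name)
deriving DecidableEq

instance : Inhabited Lit := ⟨.pos default 0⟩

/-- The left-hand side (function term) of a literal. -/
def Lit.lhs : Lit → FnTerm
  | .pos t _ => t
  | .neg t _ => t

/-- The right-hand side (standard name) of a literal. -/
def Lit.rhs : Lit → Name
  | .pos _ n => n
  | .neg _ n => n

/-- The negation `¬ℓ` of a literal. -/
def Lit.negate : Lit → Lit
  | .pos t n => .neg t n
  | .neg t n => .pos t n

/-- Names occurring in a literal. -/
def Lit.names (ℓ : Lit) : Finset Name := insert ℓ.rhs ℓ.lhs.args.toFinset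

/-- Two literals are complementary iff they are of the form `t ≈ n` and `t ≉ n`,
or of the form `t ≈ n` and `t ≈ n'` for distinct `n, n'`. -/
def Lit.complementary : Lit → Lit → Bool
  | .pos t n, .neg t' n' => t == t' && n == n'
  | .neg t n, .pos t' n' => t == t' && n == n'
  | .pos t n, .pos t' n' => t == t' && n != n'
  | .neg _ _, .neg _ _ => false

/-- A clause is a (finite) set of literals. -/
abbrev Clause := Finset Lit

/-- Unit propagation of clause `c` with literal `ℓ`: remove from `c` all
literals complementary to `ℓ`. -/
def Clause.prop (c : Clause) (ℓ : Lit) : Clause :=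
  c.filter (fun ℓ' => Lit.complementary ℓ' ℓ = false)

/-- `c₁` subsumes `c₂` iff for every `t ≈ n ∈ c₁`, `t ≈ n ∈ c₂` or `t ≉ n' ∈ c₂`
for some `n' ≠ n`, and for every `t ≉ n ∈ c₁`, `t ≉ n ∈ c₂`. -/
def Clause.subsumes (c₁ c₂ : Clause) : Prop :=
  (∀ t n, Lit.pos t n ∈ c₁ → Lit.pos t n ∈ c₂ ∨ ∃ n', n' ≠ n ∧ Lit.neg t n' ∈ c₂) ∧
  (∀ t n, Lit.neg t n ∈ c₁ → Lit.neg t n ∈ c₂)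

/-- `UP s`: the closure of the set of clauses `s` under unit propagation and
subsumption.  `UP s c` means `c ∈ UP(s)`. -/
inductive UP (s : Set Clause) : Clause → Prop
  | mem {c : Clause} : c ∈ s → UP s c
  | unit {c : Clause} {ℓ : Lit} : UP s {ℓ} → UP s c → UP s (c.prop ℓ)
  | sub {c₁ c₂ : Clause} : UP s c₁ → c₁.subsumes c₂ → UP s c₂

/-- Objective formulas: literals (`atom` is `t ≈ n`, `not atom` is `t ≉ n`),
negation and disjunction. -/
inductive Form where
  | atom (t : FnTerm) (n : Name)
  | not (φ : Form)
  | or (φ ψ : Form)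
deriving DecidableEq

/-- `α ∧ β` abbreviates `¬(¬α ∨ ¬β)`. -/
def Form.and (φ ψ : Form) : Form := .not (.or (.not φ) (.not ψ))

/-- `α → β` abbreviates `¬α ∨ β`. -/
def Form.imp (φ ψ : Form) : Form := .or (.not φ) ψ

/-- A formula is (syntactically) a clause iff it is a disjunction of literals. -/
def Form.isClause : Form → Bool
  | .atom _ _ => true
  | .not (.atom _ _) => true
  | .not _ => false
  | .or φ ψ => φ.isClause && ψ.isClause

/-- The set of literals of a clause-formula. -/
def Form.lits : Form → Clause
  | .atom t n => {Lit.pos t n}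
  | .not (.atom t n) => {Lit.neg t n}
  | .not _ => ∅
  | .or φ ψ => φ.lits ∪ ψ.lits

/-- The limited-belief truth relation `s ⊨ˢ α` for objective formulas:
a clause is true iff it is in `UP(s)`; a non-clause disjunction is true iff one
of its disjuncts is; `¬(α ∨ β)` is true iff `¬α` and `¬β` are; `¬¬α` is true
iff `α` is. -/
def sat (s : Set Clause) : Form → Prop
  | .atom t n => UP s {Lit.pos t n}
  | .not (.atom t n) => UP s {Lit.neg t n}
  | .not (.not φ) => sat s φ
  | .not (.or φ ψ) => sat s (.not φ) ∧ sat s (.not ψ)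
  | .or φ ψ => if (Form.or φ ψ).isClause then UP s (Form.or φ ψ).lits
               else sat s φ ∨ sat s ψ

/-- `satB s k α` is `s ⊨ˢ B_k α`: `B₀ α` holds iff `α` does, and `B_{k+1} α`
holds iff for some function term `t`, for all names `n`,
`s ∪ {t ≈ n} ⊨ˢ B_k α`. -/
def satB (s : Set Clause) : ℕ → Form → Prop
  | 0, φ => sat s φ
  | k+1, φ => ∃ t : FnTerm, ∀ n : Name, satB (s ∪ {({Lit.pos t n} : Clause)}) k φ

/-- A world maps function terms to standard names. -/
abbrev World := FnTerm → Name

/-- Classical truth of a literal in a world. -/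
def Lit.holds (w : World) : Lit → Prop
  | .pos t n => w t = n
  | .neg t n => w t ≠ n

/-- Classical truth of a clause in a world. -/
def Clause.holds (w : World) (c : Clause) : Prop := ∃ ℓ ∈ c, ℓ.holds w

/-- Classical truth of an objective formula in a world. -/
def wsat (w : World) : Form → Prop
  | .atom t n => w t = n
  | .not φ => ¬ wsat w φ
  | .or φ ψ => wsat w φ ∨ wsat w ψ

/-- Classical entailment `s ⊨ α`. -/
def entails (s : Set Clause) (φ : Form) : Prop :=
  ∀ w : World, (∀ c ∈ s, c.holds w) → wsat w φ

/-- Classical entailment of a clause (disjunction of its literals). -/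
def entailsClause (s : Set Clause) (c : Clause) : Prop :=
  ∀ w : World, (∀ c' ∈ s, c'.holds w) → c.holds w

/-- Function terms mentioned in a formula. -/
def Form.terms : Form → Finset FnTerm
  | .atom t _ => {t}
  | .not φ => φ.terms
  | .or φ ψ => φ.terms ∪ ψ.terms

/-- Standard names mentioned in a formula. -/
def Form.names : Form → Finset Name
  | .atom t n => insert n t.args.toFinset
  | .not φ => φ.names
  | .or φ ψ => φ.names ∪ ψ.names

/-!
Soundness is by induction along the closure rules, since splitting on `t` always includes the case
`t ≈ w(t)`. For completeness, split on every function term that occurs in `s` or `α`. Each branch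
then contains the unit clauses `t ≈ w(t)` for some world `w` and all of these terms `t`. If `w`
satisfies `s`, then it satisfies `α`, and the unit clauses subsume every clause needed to evaluate
`α`. Otherwise `w` falsifies some clause of `s`, which unit propagation reduces to the empty
clause, and the empty clause subsumes everything.
-/

section

variable {s : Set Clause} {w : World}

/-- The function terms mentioned in a clause. -/
def Clause.terms (c : Clause) : Finset FnTerm :=
  c.image Lit.lhs

/-- The diagram of the world `w` on `T`: the unit clauses `t ≈ w(t)` for `t ∈ T`. Splitting on all
terms of `T` amounts to adding the diagrams on `T` of all worlds. -/
def World.diagram (w : World) (T : Set FnTerm) : Set Clause :=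
  (fun t ↦ {Lit.pos t (w t)}) '' T

theorem Clause.lhs_mem_terms {c : Clause} {ℓ : Lit} (hℓ : ℓ ∈ c) : ℓ.lhs ∈ c.terms :=
  Finset.mem_image_of_mem _ hℓ

theorem Clause.holds_singleton {ℓ : Lit} : Clause.holds w {ℓ} ↔ ℓ.holds w := by
  simp [Clause.holds]

theorem Clause.holds_union {c₁ c₂ : Clause} :
    Clause.holds w (c₁ ∪ c₂) ↔ c₁.holds w ∨ c₂.holds w := by
  simp [Clause.holds, or_and_right, exists_or]

theorem Lit.complementary_eq_false_of_holds {ℓ₁ ℓ₂ : Lit} (h₁ : ℓ₁.holds w) (h₂ : ℓ₂.holds w) :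
    ℓ₁.complementary ℓ₂ = false := by
  cases ℓ₁ <;> cases ℓ₂ <;> simp only [Lit.complementary, Lit.holds] at * <;> grind

theorem Lit.complementary_pos_lhs_of_not_holds {ℓ : Lit} (hℓ : ¬ ℓ.holds w) :
    ℓ.complementary (.pos ℓ.lhs (w ℓ.lhs)) = true := by
  cases ℓ <;> simp only [Lit.complementary, Lit.holds, Lit.lhs] at * <;> grind

theorem Clause.holds.prop {c : Clause} {ℓ : Lit} (hc : c.holds w) (hℓ : ℓ.holds w) :
    (c.prop ℓ).holds w := by
  obtain ⟨ℓ', hmem, hholds⟩ := hc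
  exact ⟨ℓ', Finset.mem_filter.2 ⟨hmem, Lit.complementary_eq_false_of_holds hholds hℓ⟩, hholds⟩

theorem Clause.subsumes.holds {c₁ c₂ : Clause} (h : c₁.subsumes c₂) (hc : c₁.holds w) :
    c₂.holds w := by
  obtain ⟨ℓ, hmem, hℓ⟩ := hc
  cases ℓ with
  | pos t n =>
    obtain hpos | ⟨n', hne, hneg⟩ := h.1 t n hmem
    · exact ⟨_, hpos, hℓ⟩
    · exact ⟨_, hneg, fun heq ↦ hne (heq.symm.trans hℓ)⟩
  | neg t n => exact ⟨_, h.2 t n hmem, hℓ⟩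

theorem Clause.singleton_pos_subsumes {c : Clause} {ℓ : Lit} (hmem : ℓ ∈ c) (hℓ : ℓ.holds w) :
    Clause.subsumes {.pos ℓ.lhs (w ℓ.lhs)} c := by
  cases ℓ <;> simp only [Clause.subsumes, Lit.holds, Lit.lhs] at * <;> grind

theorem Clause.empty_subsumes (c : Clause) : Clause.subsumes ∅ c := by
  simp [Clause.subsumes]

theorem Form.wsat_iff_lits_holds {φ : Form} (hφ : φ.isClause) :
    wsat w φ ↔ φ.lits.holds w := by
  induction φ using Form.isClause.induct with
  | case1 t n => exact (Clause.holds_singleton (ℓ := .pos t n)).symm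
  | case2 t n => exact (Clause.holds_singleton (ℓ := .neg t n)).symm
  | case3 => simp_all [Form.isClause]
  | case4 φ ψ ihφ ihψ =>
    obtain ⟨hφ, hψ⟩ := Bool.and_eq_true_iff.1 hφ
    exact (or_congr (ihφ hφ) (ihψ hψ)).trans Clause.holds_union.symm

theorem Form.terms_lits_subset (φ : Form) : φ.lits.terms ⊆ φ.terms := by
  induction φ using Form.lits.induct with
  | case1 | case2 | case3 => simp [Form.lits, Form.terms, Clause.terms, Lit.lhs]
  | case4 φ ψ ihφ ihψ =>
    rw [Form.lits, Clause.terms, Finset.image_union]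
    exact Finset.union_subset_union ihφ ihψ

@[elab_as_elim]
theorem Form.sat_induction {motive : Form → Prop}
    (clause : ∀ φ : Form, φ.isClause → motive φ)
    (not_not : ∀ φ : Form, motive φ → motive φ.not.not)
    (not_or : ∀ φ ψ : Form, motive φ.not → motive ψ.not → motive (φ.or ψ).not)
    (or : ∀ φ ψ : Form, ¬ (φ.or ψ).isClause → motive φ → motive ψ → motive (φ.or ψ))
    (φ : Form) : motive φ :=
  sat.induct motive (fun _ _ ↦ clause _ rfl) (fun _ _ ↦ clause _ rfl) not_not not_or
    (fun _ _ ↦ clause _) or φ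

theorem sat_iff_UP_lits {φ : Form} (hφ : φ.isClause) : sat s φ ↔ UP s φ.lits := by
  cases φ using sat.induct with
  | case1 | case2 => rw [sat, Form.lits]
  | case3 | case4 => simp [Form.isClause] at hφ
  | case5 | case6 => rw [sat, if_pos hφ]

theorem sat_not_not {φ : Form} : sat s φ.not.not ↔ sat s φ := by
  rw [sat]

theorem sat_not_or {φ ψ : Form} : sat s (φ.or ψ).not ↔ sat s φ.not ∧ sat s ψ.not := by
  rw [sat]

theorem sat_or {φ ψ : Form} (h : ¬ (φ.or ψ).isClause) :
    sat s (φ.or ψ) ↔ sat s φ ∨ sat s ψ := by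
  rw [sat, if_neg h]

theorem UP.holds {c : Clause} (h : UP s c) (hs : ∀ c ∈ s, c.holds w) : c.holds w := by
  induction h with
  | mem hc => exact hs _ hc
  | unit _ _ ihℓ ihc => exact ihc.prop (Clause.holds_singleton.1 ihℓ)
  | sub _ hsub ih => exact hsub.holds ih

theorem wsat_of_sat (hs : ∀ c ∈ s, c.holds w) {φ : Form} (h : sat s φ) : wsat w φ := by
  induction φ using Form.sat_induction with
  | clause φ hφ => exact (Form.wsat_iff_lits_holds hφ).2 (((sat_iff_UP_lits hφ).1 h).holds hs)
  | not_not φ ih => exact not_not_intro (ih (sat_not_not.1 h))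
  | not_or φ ψ ihφ ihψ =>
    obtain ⟨hφ, hψ⟩ := sat_not_or.1 h
    exact not_or.2 ⟨ihφ hφ, ihψ hψ⟩
  | or φ ψ hclause ihφ ihψ => exact ((sat_or hclause).1 h).imp ihφ ihψ

theorem entails_of_satB {k : ℕ} {φ : Form} (h : satB s k φ) : entails s φ := by
  intro w hs
  induction k generalizing s with
  | zero => exact wsat_of_sat hs h
  | succ k ih =>
    obtain ⟨t, ht⟩ := h
    refine ih (ht (w t)) ?_
    rintro c (hc | rfl)
    · exact hs c hc
    · exact Clause.holds_singleton.2 rfl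

theorem UP.of_holds {c : Clause} (hw : ∀ t ∈ c.terms, UP s {.pos t (w t)}) (hc : c.holds w) :
    UP s c := by
  obtain ⟨ℓ, hmem, hℓ⟩ := hc
  exact (hw _ (Clause.lhs_mem_terms hmem)).sub (Clause.singleton_pos_subsumes hmem hℓ)

theorem UP.empty_of_not_holds {c : Clause} (h : UP s c)
    (hw : ∀ t ∈ c.terms, UP s {.pos t (w t)}) (hc : ¬ c.holds w) : UP s ∅ := by
  induction c using Finset.strongInduction with
  | H c ih =>
    obtain rfl | ⟨ℓ, hmem⟩ := c.eq_empty_or_nonempty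
    · exact h
    have hℓ : ¬ ℓ.holds w := fun hℓ ↦ hc ⟨ℓ, hmem, hℓ⟩
    have hssub : Clause.prop c (.pos ℓ.lhs (w ℓ.lhs)) ⊂ c :=
      Finset.filter_ssubset.2 ⟨ℓ, hmem, by simp [Lit.complementary_pos_lhs_of_not_holds hℓ]⟩
    exact ih _ hssub ((hw _ (Clause.lhs_mem_terms hmem)).unit h)
      (fun t ht ↦ hw t (Finset.image_subset_image hssub.subset ht))
      (fun ⟨ℓ', hmem', hℓ'⟩ ↦ hc ⟨ℓ', hssub.subset hmem', hℓ'⟩)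

theorem sat_of_UP_empty (h : UP s ∅) (φ : Form) : sat s φ := by
  induction φ using Form.sat_induction with
  | clause φ hφ => exact (sat_iff_UP_lits hφ).2 (h.sub φ.lits.empty_subsumes)
  | not_not φ ih => exact sat_not_not.2 ih
  | not_or φ ψ ihφ ihψ => exact sat_not_or.2 ⟨ihφ, ihψ⟩
  | or φ ψ hclause ihφ _ => exact (sat_or hclause).2 (.inl ihφ)

theorem sat_of_wsat {φ : Form} (hw : ∀ t ∈ φ.terms, UP s {.pos t (w t)}) (h : wsat w φ) :
    sat s φ := by
  induction φ using Form.sat_induction with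
  | clause φ hφ =>
    exact (sat_iff_UP_lits hφ).2 <| UP.of_holds (fun t ht ↦ hw t (φ.terms_lits_subset ht))
      ((Form.wsat_iff_lits_holds hφ).1 h)
  | not_not φ ih => exact sat_not_not.2 (ih hw (not_not.1 h))
  | not_or φ ψ ihφ ihψ =>
    obtain ⟨hφ, hψ⟩ := not_or.1 h
    exact sat_not_or.2 ⟨ihφ (fun t ht ↦ hw t (Finset.mem_union_left _ ht)) hφ,
      ihψ (fun t ht ↦ hw t (Finset.mem_union_right _ ht)) hψ⟩
  | or φ ψ hclause ihφ ihψ =>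
    exact (sat_or hclause).2 <| h.imp (ihφ fun t ht ↦ hw t (Finset.mem_union_left _ ht))
      (ihψ fun t ht ↦ hw t (Finset.mem_union_right _ ht))

theorem World.diagram_update_insert (w : World) {t : FnTerm} {T : Set FnTerm} (ht : t ∉ T)
    (n : Name) :
    World.diagram (Function.update w t n) (insert t T) = {{Lit.pos t n}} ∪ w.diagram T := by
  have hT : World.diagram (Function.update w t n) T = w.diagram T :=
    Set.image_congr fun t' ht' ↦ by rw [Function.update_of_ne (ne_of_mem_of_not_mem ht' ht)]
  rw [← hT, World.diagram, Set.image_insert_eq, Function.update_self]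
  rfl

theorem satB_card_of_forall_diagram {T : Finset FnTerm} {φ : Form}
    (h : ∀ w : World, sat (s ∪ w.diagram T) φ) : satB s T.card φ := by
  induction T using Finset.induction_on generalizing s with
  | empty => simpa [World.diagram, satB] using h default
  | insert t T ht ih =>
    rw [Finset.card_insert_of_notMem ht]
    refine ⟨t, fun n ↦ ih fun w ↦ ?_⟩
    have hupdate := h (Function.update w t n)
    rwa [Finset.coe_insert, World.diagram_update_insert w (Finset.mem_coe.not.2 ht),
      ← Set.union_assoc] at hupdate

theorem satB_card_of_entails {T : Finset FnTerm} (hs : ∀ c ∈ s, c.terms ⊆ T) {φ : Form}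
    (hφ : φ.terms ⊆ T) (h : entails s φ) : satB s T.card φ := by
  refine satB_card_of_forall_diagram fun w ↦ ?_
  have hT : ∀ t ∈ T, UP (s ∪ w.diagram T) {.pos t (w t)} := fun t ht ↦
    .mem (.inr (Set.mem_image_of_mem _ ht))
  by_cases hw : ∀ c ∈ s, c.holds w
  · exact sat_of_wsat (fun t ht ↦ hT t (hφ ht)) (h w hw)
  · push Not at hw
    obtain ⟨c, hc, hfalse⟩ := hw
    have hempty : UP (s ∪ w.diagram T) ∅ :=
      (UP.mem (.inl hc)).empty_of_not_holds (fun t ht ↦ hT t (hs c hc ht)) hfalse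
    exact sat_of_UP_empty hempty φ

end

instance : Infinite FnTerm :=
  .of_injective (FnTerm.mk · []) fun _ _ h ↦ congrArg FnTerm.sym h

theorem limited_belief_sound_eventually_complete_general {s : Set Clause}
    (hs : (⋃ c ∈ s, (c.terms : Set FnTerm)).Finite) (α : Form) :
    ∀ᶠ k in Filter.atTop, (satB s k α ↔ entails s α) := by
  filter_upwards [Filter.eventually_ge_atTop (hs.toFinset ∪ α.terms).card] with k hk
  obtain ⟨T, hT, rfl⟩ := Infinite.exists_superset_card_eq _ k hk
  obtain ⟨hsT, hαT⟩ := Finset.union_subset_iff.1 hT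
  have hterms : ∀ c ∈ s, c.terms ⊆ T := by simpa using hsT
  exact ⟨entails_of_satB, satB_card_of_entails hterms hαT⟩

/-- **Soundness and eventual completeness combined** (Proposition 3): for every
finite set of clauses `s` and objective formula `α` there is a large-enough
belief level `k` such that `s ⊨ˢ B_k α` iff `s ⊨ α`. -/
theorem limited_belief_sound_eventually_complete (s : Set Clause)
    (hfin : s.Finite) (α : Form) :
    ∃ k : ℕ, (satB s k α ↔ entails s α) := by
  have hterms := hfin.biUnion fun c _ ↦ c.terms.finite_toSet
  exact (limited_belief_sound_eventually_complete_general hterms α).exists
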